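/- Let l ≥ 1, p > 0 and C > 0. Suppose h : ℂ^l → ℂ is differentiable in the real sense and satisfies, for every z ∈ ℂ^l and every m ∈ {1,…,l}, |∂h/∂z_m(z)| + |∂h/∂z̄_m(z)| ≤ C ∑_{j=1}^l |z_j|^p. Then there is a constant C' > 0, depending only on C, p and l, such that for all z, z' ∈ ℂ^l: |h(z) − h(z')| ≤ C' ∑_{m=1}^l ∑_{j=1}^l (|z_j|^p + |z_j'|^p) |z_m − z_m'|. -/

import Mathlib

open Complex MeasureTheory

/-- Wirtinger derivative `∂h/∂z_m` of a function `h : ℂ^l → ℂ`, differentiable in the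
real sense: `(1/2)(∂h/∂x_m − i ∂h/∂y_m)`. -/
noncomputable def wderiv {l : ℕ} (h : (Fin l → ℂ) → ℂ) (m : Fin l) (z : Fin l → ℂ) : ℂ :=
  (1 / 2) * (fderiv ℝ h z (Pi.single m 1) - Complex.I * fderiv ℝ h z (Pi.single m Complex.I))

/-- Conjugate Wirtinger derivative `∂h/∂z̄_m = (1/2)(∂h/∂x_m + i ∂h/∂y_m)`. -/
noncomputable def wderivBar {l : ℕ} (h : (Fin l → ℂ) → ℂ) (m : Fin l) (z : Fin l → ℂ) : ℂ :=
  (1 / 2) * (fderiv ℝ h z (Pi.single m 1) + Complex.I * fderiv ℝ h z (Pi.single m Complex.I))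

/-- The real differential in direction `v e_m` in terms of Wirtinger derivatives. -/
lemma fderiv_single_eq {l : ℕ} (h : (Fin l → ℂ) → ℂ) (m : Fin l) (z : Fin l → ℂ) (v : ℂ) :
    fderiv ℝ h z (Pi.single m v) =
      wderiv h m z * v + wderivBar h m z * (starRingEnd ℂ) v := by
  have e : (Pi.single m v : Fin l → ℂ) =
      v.re • (Pi.single m (1 : ℂ) : Fin l → ℂ) + v.im • (Pi.single m Complex.I : Fin l → ℂ) := by
    rw [← Pi.single_smul, ← Pi.single_smul, ← Pi.single_add]
    congr 1
    apply Complex.ext <;> simp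
  rw [e, map_add, map_smul, map_smul]
  unfold wderiv wderivBar
  generalize fderiv ℝ h z (Pi.single m 1) = a
  generalize fderiv ℝ h z (Pi.single m Complex.I) = b
  apply Complex.ext <;> simp <;> ring

lemma norm_fderiv_le {l : ℕ} (h : (Fin l → ℂ) → ℂ) (z v : Fin l → ℂ) (B : ℝ)
    (hB : ∀ m, ‖wderiv h m z‖ + ‖wderivBar h m z‖ ≤ B) :
    ‖fderiv ℝ h z v‖ ≤ ∑ m, B * ‖v m‖ := by
  have e : v = ∑ m, Pi.single m (v m) := (Finset.univ_sum_single v).symm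
  conv_lhs => rw [e, map_sum]
  refine (norm_sum_le _ _).trans (Finset.sum_le_sum fun m _ => ?_)
  rw [fderiv_single_eq]
  calc _ ≤ ‖wderiv h m z‖ * ‖v m‖ + ‖wderivBar h m z‖ * ‖v m‖ := by
        refine (norm_add_le _ _).trans (le_of_eq ?_)
        simp
    _ = (‖wderiv h m z‖ + ‖wderivBar h m z‖) * ‖v m‖ := by ring
    _ ≤ _ := mul_le_mul_of_nonneg_right (hB m) (norm_nonneg _)

lemma rpow_segment_le (a b : ℂ) (p t : ℝ) (hp : 0 < p) (h0 : 0 ≤ t) (h1 : t ≤ 1) :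
    ‖b + t • (a - b)‖ ^ p ≤ ‖a‖ ^ p + ‖b‖ ^ p := by
  have h : ‖b + t • (a - b)‖ ≤ max ‖a‖ ‖b‖ := by
    have e : b + t • (a - b) = (1 - t) • b + t • a := by module
    rw [e]
    refine (norm_add_le _ _).trans ?_
    rw [norm_smul, norm_smul, Real.norm_of_nonneg h0, Real.norm_of_nonneg (by linarith)]
    nlinarith [le_max_left ‖a‖ ‖b‖, le_max_right ‖a‖ ‖b‖]
  have ha : 0 ≤ ‖a‖ ^ p := by positivity
  have hb : 0 ≤ ‖b‖ ^ p := by positivity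
  refine (Real.rpow_le_rpow (norm_nonneg _) h hp.le).trans ?_
  rcases max_choice ‖a‖ ‖b‖ with h | h <;> rw [h] <;> linarith

theorem stmt_1 (l : ℕ) (hl : 1 ≤ l) (p C : ℝ) (hp : 0 < p) (hC : 0 < C) :
    ∃ C' : ℝ, 0 < C' ∧
      ∀ h : (Fin l → ℂ) → ℂ, Differentiable ℝ h →
        (∀ (z : Fin l → ℂ) (m : Fin l),
          ‖wderiv h m z‖ + ‖wderivBar h m z‖ ≤ C * ∑ j, ‖z j‖ ^ p) →
        ∀ z z' : Fin l → ℂ,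
          ‖h z - h z'‖ ≤ C' * ∑ m, ∑ j, (‖z j‖ ^ p + ‖z' j‖ ^ p) * ‖z m - z' m‖ := by
  refine ⟨C, hC, fun h hd hb z z' => ?_⟩
  have hder : ∀ t : ℝ, HasDerivAt (fun t : ℝ => h (z' + t • (z - z')))
      (fderiv ℝ h (z' + t • (z - z')) (z - z')) t := by
    intro t
    have h1 : HasDerivAt (fun t : ℝ => z' + t • (z - z')) (z - z') t := by
      simpa using ((hasDerivAt_id t).smul_const (z - z')).const_add z'
    exact (hd (z' + t • (z - z'))).hasFDerivAt.comp_hasDerivAt t h1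
  have key := norm_image_sub_le_of_norm_deriv_le_segment_01'
    (C := C * ∑ m, ∑ j, (‖z j‖ ^ p + ‖z' j‖ ^ p) * ‖z m - z' m‖)
    (fun t _ => (hder t).hasDerivWithinAt) (fun t ht => by
      refine (norm_fderiv_le h _ (z - z') (C * ∑ j, (‖z j‖ ^ p + ‖z' j‖ ^ p)) fun m => ?_).trans
        (le_of_eq ?_)
      · refine (hb _ m).trans (mul_le_mul_of_nonneg_left ?_ hC.le)
        exact Finset.sum_le_sum fun j _ => rpow_segment_le (z j) (z' j) p t hp ht.1 ht.2.le
      · simp only [Finset.mul_sum, Finset.sum_mul, mul_assoc, Pi.sub_apply])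
  simpa using key
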